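/- Let 𝓖 be a singular Riemannian foliation on the sphere S^k with no 0-dimensional leaves. Then the first basic cohomology H¹(S^k/𝓖) vanishes. (For k ≠ 1 this follows from H¹(S^k) = 0 and injectivity of H¹(S^k/𝓖) → H¹(S^k); for k = 1 the foliation must be the one-leaf foliation, for which basic 1-forms capture only the zero class.) -/

import Mathlib

open Metric
open scoped Manifold

section ClosedForms

open Set Filter
open scoped Topology ContDiff

variable {E : Type*} [NormedAddCommGroup E] [NormedSpace ℝ E]
  {M : Type*} [TopologicalSpace M] [ChartedSpace E M]

/-- `f` is a smooth primitive of the 1-form `α` on the set `U`. -/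
def IsPrimitiveOn (α : (x : M) → TangentSpace 𝓘(ℝ, E) x →L[ℝ] ℝ) (f : M → ℝ) (U : Set M) : Prop :=
  ContMDiffOn 𝓘(ℝ, E) 𝓘(ℝ, ℝ) ∞ f U ∧
    ∀ y ∈ U, ∀ w : TangentSpace 𝓘(ℝ, E) y, mfderiv 𝓘(ℝ, E) 𝓘(ℝ, ℝ) f y w = α y w

/-- The 1-form `α` read in the chart `e`. -/
noncomputable def formInChart (α : (x : M) → TangentSpace 𝓘(ℝ, E) x →L[ℝ] ℝ)
    (e : OpenPartialHomeomorph M E) (z : E) : E →L[ℝ] ℝ :=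
  (α (e.symm z)).comp (mfderiv 𝓘(ℝ, E) 𝓘(ℝ, E) e.symm z)

variable {α : (x : M) → TangentSpace 𝓘(ℝ, E) x →L[ℝ] ℝ} {f g : M → ℝ} {U V : Set M}
  {e : OpenPartialHomeomorph M E}

theorem IsPrimitiveOn.mono (hf : IsPrimitiveOn α f U) (h : V ⊆ U) : IsPrimitiveOn α f V :=
  ⟨hf.1.mono h, fun y hy => hf.2 y (h hy)⟩

theorem IsPrimitiveOn.add_const (hf : IsPrimitiveOn α f U) (hU : IsOpen U) (c : ℝ) :
    IsPrimitiveOn α (fun x => f x + c) U := by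
  refine ⟨hf.1.add contMDiffOn_const, fun y hy w => ?_⟩
  have hd : MDifferentiableAt 𝓘(ℝ, E) 𝓘(ℝ, ℝ) f y :=
    (hf.1.contMDiffAt (hU.mem_nhds hy)).mdifferentiableAt (by simp)
  have h := (hd.hasMFDerivAt.add (hasMFDerivAt_const (I := 𝓘(ℝ, E)) (I' := 𝓘(ℝ, ℝ)) c y)).mfderiv
  refine (DFunLike.congr_fun h w).trans (Eq.trans ?_ (hf.2 y hy w))
  exact add_zero (mfderiv 𝓘(ℝ, E) 𝓘(ℝ, ℝ) f y w : ℝ)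

theorem IsPrimitiveOn.congr (hf : IsPrimitiveOn α f U) (hU : IsOpen U) (h : EqOn g f U) :
    IsPrimitiveOn α g U := by
  refine ⟨hf.1.congr h, fun y hy w => ?_⟩
  have hgf : g =ᶠ[𝓝 y] f := h.eventuallyEq_of_mem (hU.mem_nhds hy)
  rw [← hf.2 y hy w, hgf.mfderiv_eq]
  rfl

theorem contDiffOn_comp_symm [IsManifold 𝓘(ℝ, E) ∞ M]
    (he : e ∈ atlas E M) (hf : ContMDiffOn 𝓘(ℝ, E) 𝓘(ℝ, ℝ) ∞ f U) :
    ContDiffOn ℝ ∞ (f ∘ e.symm) (e.target ∩ e.symm ⁻¹' U) := by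
  rw [← contMDiffOn_iff_contDiffOn]
  exact hf.comp ((contMDiffOn_symm_of_mem_maximalAtlas
    (IsManifold.subset_maximalAtlas he)).mono inter_subset_left) inter_subset_right

theorem IsPrimitiveOn.hasFDerivAt_comp_symm [IsManifold 𝓘(ℝ, E) ∞ M] (he : e ∈ atlas E M)
    (hf : IsPrimitiveOn α f U) (hU : IsOpen U) {z : E} (hz : z ∈ e.target) (hzU : e.symm z ∈ U) :
    HasFDerivAt (f ∘ e.symm) (formInChart α e z) z := by
  have : IsManifold 𝓘(ℝ, E) 1 M := .of_le (n := ∞) (by simp)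
  have hfd : MDifferentiableAt 𝓘(ℝ, E) 𝓘(ℝ, ℝ) f (e.symm z) :=
    (hf.1.contMDiffAt (hU.mem_nhds hzU)).mdifferentiableAt (by simp)
  have hed := (mdifferentiable_of_mem_atlas (I := 𝓘(ℝ, E)) he).mdifferentiableAt_symm hz
  have h := (hfd.hasMFDerivAt.comp z hed.hasMFDerivAt).hasFDerivAt
  have heq : formInChart α e z = (mfderiv 𝓘(ℝ, E) 𝓘(ℝ, ℝ) f (e.symm z)).comp
      (mfderiv 𝓘(ℝ, E) 𝓘(ℝ, E) e.symm z) := by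
    refine ContinuousLinearMap.ext fun w => ?_
    exact (hf.2 _ hzU _).symm
  exact heq ▸ h

/-- A 1-form with local primitives has a primitive on the domain of a chart whose image is
the whole model space. -/
theorem exists_isPrimitiveOn_source [IsManifold 𝓘(ℝ, E) ∞ M] (he : e ∈ atlas E M)
    (htarget : e.target = univ)
    (hα : ∀ x, ∃ U : Set M, IsOpen U ∧ x ∈ U ∧ ∃ h, IsPrimitiveOn α h U) :
    ∃ f, IsPrimitiveOn α f e.source := by
  have : IsManifold 𝓘(ℝ, E) 1 M := .of_le (n := ∞) (by simp)
  have hlocal : ∀ z, ∃ h : E → ℝ, ContDiffAt ℝ ∞ h z ∧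
      formInChart α e =ᶠ[𝓝 z] fderiv ℝ h := by
    intro z
    obtain ⟨U, hU, hzU, h, hh⟩ := hα (e.symm z)
    have hopen : IsOpen (e.target ∩ e.symm ⁻¹' U) := e.isOpen_inter_preimage_symm hU
    have hmem : e.target ∩ e.symm ⁻¹' U ∈ 𝓝 z := hopen.mem_nhds ⟨by simp [htarget], hzU⟩
    refine ⟨h ∘ e.symm, (contDiffOn_comp_symm he hh.1).contDiffAt hmem, ?_⟩
    filter_upwards [hmem] with y hy
    exact (hh.hasFDerivAt_comp_symm he hU hy.1 hy.2).fderiv.symm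
  have hsmooth : ContDiff ℝ ∞ (formInChart α e) := by
    rw [contDiff_iff_contDiffAt]
    intro z
    obtain ⟨h, hh, heq⟩ := hlocal z
    exact (hh.fderiv_right (m := ∞) (by simp)).congr_of_eventuallyEq heq
  obtain ⟨F, hF⟩ := convex_univ.exists_forall_hasFDerivAt_of_fderiv_symmetric isOpen_univ
    (hsmooth.differentiable (by simp)).differentiableOn (fun z _ x y => by
      obtain ⟨h, hh, heq⟩ := hlocal z
      rw [heq.fderiv_eq]
      exact hh.isSymmSndFDerivAt (by simpa using WithTop.coe_le_coe.2 (le_top (a := (2 : ℕ∞)))) x y)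
  have hFsmooth : ContDiff ℝ ∞ F := by
    rw [contDiff_infty_iff_fderiv]
    exact ⟨fun z => (hF z trivial).differentiableAt, by
      rwa [funext fun z => (hF z trivial).fderiv]⟩
  refine ⟨F ∘ e, hFsmooth.contMDiff.comp_contMDiffOn
    (contMDiffOn_of_mem_maximalAtlas (IsManifold.subset_maximalAtlas he)), fun y hy w => ?_⟩
  have hed := mdifferentiable_of_mem_atlas (I := 𝓘(ℝ, E)) he
  have h := ((hF (e y) trivial).hasMFDerivAt.comp y (hed.mdifferentiableAt hy).hasMFDerivAt).mfderiv
  have hid := DFunLike.congr_fun (hed.symm_comp_deriv hy) w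
  refine (DFunLike.congr_fun h w).trans ?_
  have hbase : ∀ y' : M, y' = y → ∀ u : E, (α y' u : ℝ) = α y u := by
    rintro _ rfl _
    rfl
  exact (hbase _ (e.left_inv hy) _).trans (congrArg (α y) hid)

/-- Two primitives of a 1-form differ by a constant on a set whose chart image is connected. -/
theorem IsPrimitiveOn.exists_eq_add_const [IsManifold 𝓘(ℝ, E) ∞ M] (he : e ∈ atlas E M)
    (hf : IsPrimitiveOn α f U) (hg : IsPrimitiveOn α g U) (hU : IsOpen U) (hUe : U ⊆ e.source)
    (hconn : IsPreconnected (e.target ∩ e.symm ⁻¹' U)) : ∃ c, EqOn f (fun x => g x + c) U := by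
  obtain ⟨c, hc⟩ := (e.isOpen_inter_preimage_symm hU).exists_eq_add_of_fderiv_eq hconn
    ((contDiffOn_comp_symm he hf.1).differentiableOn (by simp))
    ((contDiffOn_comp_symm he hg.1).differentiableOn (by simp)) (fun z hz => by
      rw [(hf.hasFDerivAt_comp_symm he hU hz.1 hz.2).fderiv,
        (hg.hasFDerivAt_comp_symm he hU hz.1 hz.2).fderiv])
  refine ⟨c, fun x hx => ?_⟩
  have hxe := hUe hx
  simpa [e.left_inv hxe] using hc ⟨e.map_source hxe, by simpa [e.left_inv hxe] using hx⟩

/-- A 1-form with local primitives has a global primitive on a manifold covered by two charts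
onto the model space whose domains have connected intersection. -/
theorem exists_isPrimitiveOn_univ_of_two_charts [IsManifold 𝓘(ℝ, E) ∞ M]
    {e' : OpenPartialHomeomorph M E} (he : e ∈ atlas E M) (he' : e' ∈ atlas E M)
    (htarget : e.target = univ) (htarget' : e'.target = univ)
    (hcover : e.source ∪ e'.source = univ)
    (hconn : IsPreconnected (e.symm ⁻¹' e'.source))
    (hα : ∀ x, ∃ U : Set M, IsOpen U ∧ x ∈ U ∧ ∃ h, IsPrimitiveOn α h U) :
    ∃ f, IsPrimitiveOn α f univ := by
  classical
  obtain ⟨f, hf⟩ := exists_isPrimitiveOn_source he htarget hα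
  obtain ⟨g, hg⟩ := exists_isPrimitiveOn_source he' htarget' hα
  obtain ⟨c, hc⟩ := (hf.mono inter_subset_left).exists_eq_add_const he
    (hg.mono inter_subset_right) (e.open_source.inter e'.open_source) inter_subset_left (by
      convert hconn using 1
      ext z
      have hz : z ∈ e.target := by simp [htarget]
      simp [htarget, e.map_target hz])
  have h₁ : IsPrimitiveOn α (e.source.piecewise f fun x => g x + c) e.source :=
    hf.congr e.open_source (piecewise_eqOn _ _ _)
  have h₂ : IsPrimitiveOn α (e.source.piecewise f fun x => g x + c) e'.source := by
    refine (hg.add_const e'.open_source c).congr e'.open_source fun x hx => ?_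
    by_cases hxe : x ∈ e.source
    · rw [piecewise_eq_of_mem _ _ _ hxe]
      exact hc ⟨hxe, hx⟩
    · rw [piecewise_eq_of_notMem _ _ _ hxe]
  refine ⟨e.source.piecewise f fun x => g x + c, fun x _ => ?_, fun x _ => ?_⟩
  · rcases hcover.ge (mem_univ x) with hx | hx
    · exact (h₁.1.contMDiffAt (e.open_source.mem_nhds hx)).contMDiffWithinAt
    · exact (h₂.1.contMDiffAt (e'.open_source.mem_nhds hx)).contMDiffWithinAt
  · rcases hcover.ge (mem_univ x) with hx | hx
    · exact h₁.2 x hx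
    · exact h₂.2 x hx

end ClosedForms

/-- A 1-form with local primitives on a sphere of dimension at least two has a primitive. -/
theorem exists_isPrimitiveOn_univ_sphere {k : ℕ} (hk : 2 ≤ k)
    [Fact (Module.finrank ℝ (EuclideanSpace ℝ (Fin (k + 1))) = k + 1)]
    (ω : (x : sphere (0 : EuclideanSpace ℝ (Fin (k + 1))) 1) → TangentSpace (𝓡 k) x →L[ℝ] ℝ)
    (hω : ∀ x : sphere (0 : EuclideanSpace ℝ (Fin (k + 1))) 1,
      ∃ U : Set (sphere (0 : EuclideanSpace ℝ (Fin (k + 1))) 1),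
        IsOpen U ∧ x ∈ U ∧ ∃ h, IsPrimitiveOn ω h U) :
    ∃ f, IsPrimitiveOn ω f Set.univ := by
  obtain ⟨v⟩ : Nonempty (sphere (0 : EuclideanSpace ℝ (Fin (k + 1))) 1) :=
    (NormedSpace.sphere_nonempty.2 zero_le_one).to_subtype
  have hv : v ≠ -v := ne_neg_of_mem_unit_sphere ℝ v
  refine exists_isPrimitiveOn_univ_of_two_charts (e := stereographic' k v)
    (e' := stereographic' k (-v)) ⟨v, rfl⟩ ⟨-v, rfl⟩ (stereographic'_target _)
    (stereographic'_target _) ?_ ?_ hω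
  · ext x
    simp only [stereographic'_source, Set.mem_union, Set.mem_compl_iff, Set.mem_singleton_iff,
      Set.mem_univ, iff_true]
    by_contra! h
    exact hv (h.1.symm.trans h.2)
  · have hpre : (stereographic' k v).symm ⁻¹' (stereographic' k (-v)).source =
        {stereographic' k v (-v)}ᶜ := by
      ext z
      have hz : z ∈ (stereographic' k v).target := by simp
      simp only [stereographic'_source, Set.mem_preimage, Set.mem_compl_iff,
        Set.mem_singleton_iff, not_iff_not]
      exact ((stereographic' k v).symm.eq_symm_apply hz (by simpa using hv.symm)).symm
    rw [hpre]
    exact (isConnected_compl_singleton_of_one_lt_rank (by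
      rw [← Module.finrank_eq_rank, finrank_euclideanSpace_fin]
      exact_mod_cast hk) _).isPreconnected

/-- For a singular Riemannian foliation `𝓖` on the sphere `S^k` with no
`0`-dimensional leaves (the tangent distribution, spanned by the vector fields `𝒱`, vanishes
nowhere), the first basic cohomology vanishes: every closed basic 1-form has a basic
primitive. -/
theorem stmt_10 (k : ℕ)
    [Fact (Module.finrank ℝ (EuclideanSpace ℝ (Fin (k + 1))) = k + 1)]
    (𝒱 : Set ((x : sphere (0 : EuclideanSpace ℝ (Fin (k + 1))) 1) →
      TangentSpace (𝓡 k) x))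
    -- no 0-dimensional leaves: the leaves' tangent spaces are nowhere zero
    (h𝒱 : ∀ x : sphere (0 : EuclideanSpace ℝ (Fin (k + 1))) 1, ∃ V ∈ 𝒱, V x ≠ 0) :
    ∀ ω : (x : sphere (0 : EuclideanSpace ℝ (Fin (k + 1))) 1) → TangentSpace (𝓡 k) x →L[ℝ] ℝ,
      -- `ω` basic
      (∀ V ∈ 𝒱, ∀ x, ω x (V x) = 0) →
      -- `ω` closed (it admits local primitives)
      (∀ x : sphere (0 : EuclideanSpace ℝ (Fin (k + 1))) 1,
        ∃ U : Set (sphere (0 : EuclideanSpace ℝ (Fin (k + 1))) 1), IsOpen U ∧ x ∈ U ∧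
        ∃ hloc : sphere (0 : EuclideanSpace ℝ (Fin (k + 1))) 1 → ℝ,
          ContMDiffOn (𝓡 k) (modelWithCornersSelf ℝ ℝ) (⊤ : ℕ∞) hloc U ∧
          ∀ y ∈ U, ∀ w : TangentSpace (𝓡 k) y,
            mfderiv (𝓡 k) (modelWithCornersSelf ℝ ℝ) hloc y w = ω y w) →
      -- then `ω` has a basic primitive: `[ω] = 0` in `H¹(S^k/𝓖)`
      ∃ f : sphere (0 : EuclideanSpace ℝ (Fin (k + 1))) 1 → ℝ,
        ContMDiff (𝓡 k) (modelWithCornersSelf ℝ ℝ) (⊤ : ℕ∞) f ∧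
        (∀ V ∈ 𝒱, ∀ x, mfderiv (𝓡 k) (modelWithCornersSelf ℝ ℝ) f x (V x) = 0) ∧
        ∀ (x : sphere (0 : EuclideanSpace ℝ (Fin (k + 1))) 1) (w : TangentSpace (𝓡 k) x),
          mfderiv (𝓡 k) (modelWithCornersSelf ℝ ℝ) f x w = ω x w := by
  intro ω hbasic hω
  have hω' : ∃ f, IsPrimitiveOn ω f Set.univ := by
    rcases Nat.lt_or_ge k 2 with hk | hk
    · -- In dimension at most one, a nonzero vector spans the tangent space.
      have hzero : ∀ x, ω x = 0 := by
        intro x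
        obtain ⟨V, hV, hVx⟩ := h𝒱 x
        have hrank : Module.finrank ℝ (TangentSpace (𝓡 k) x) ≤ 1 := by
          change Module.finrank ℝ (EuclideanSpace ℝ (Fin k)) ≤ 1
          rw [finrank_euclideanSpace_fin]
          lia
        have hrank' : Module.finrank ℝ (TangentSpace (𝓡 k) x) = 1 := by
          have : Nontrivial (TangentSpace (𝓡 k) x) := ⟨V x, 0, hVx⟩
          have : FiniteDimensional ℝ (TangentSpace (𝓡 k) x) :=
            inferInstanceAs (FiniteDimensional ℝ (EuclideanSpace ℝ (Fin k)))
          exact le_antisymm hrank Module.finrank_pos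
        ext w
        obtain ⟨c, rfl⟩ := (finrank_eq_one_iff_of_nonzero' (V x) hVx).1 hrank' w
        simp [hbasic V hV x]
      refine ⟨fun _ => 0, contMDiffOn_const, fun y _ w => ?_⟩
      rw [hzero, mfderiv_const]
      rfl
    · exact exists_isPrimitiveOn_univ_sphere hk ω hω
  obtain ⟨f, hf, hfω⟩ := hω'
  refine ⟨f, contMDiffOn_univ.1 hf, fun V hV x => ?_, fun x w => hfω x trivial w⟩
  exact (hfω x trivial _).trans (hbasic V hV x)
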